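/- arXiv:1905.07034 — 10 statements merged into one kernel-verified Lean document; each statement's English description precedes it below -/
import Mathlib

section
/- Let β ∈ ℝ with β ≠ 0 and β ≠ 1, and let μ₁ > 0 be fixed. Then the function μ₂ ↦ D^d_β(μ₂‖μ₁) is strictly convex on the interval (0,∞). (In contrast to β-divergence in its second argument, this convexity holds for every admissible β ∈ ℝ.) -/
/-- Generalized dual Kullback–Leibler divergence `D^d_β(μ₂‖μ₁)`. -/
noncomputable def dualDiv (β μ₁ μ₂ : ℝ) : ℝ :=
  (μ₂ ^ β - β * μ₂ * μ₁ ^ (β - 1) + (β - 1) * μ₁ ^ β) / (β * (β - 1))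

theorem dualDiv_strictConvexOn (β μ₁ : ℝ) (hβ0 : β ≠ 0) (hβ1 : β ≠ 1) (hμ₁ : 0 < μ₁) :
    StrictConvexOn ℝ (Set.Ioi (0 : ℝ)) (fun μ₂ : ℝ => dualDiv β μ₁ μ₂) := by
  have hb : β - 1 ≠ 0 := sub_ne_zero.mpr hβ1
  have hd : ∀ x ∈ Set.Ioi (0 : ℝ), HasDerivAt (fun μ₂ : ℝ => dualDiv β μ₁ μ₂)
      ((x ^ (β - 1) - μ₁ ^ (β - 1)) / (β - 1)) x := by
    intro x hx
    have h1 := Real.hasDerivAt_rpow_const (x := x) (p := β) (Or.inl (ne_of_gt hx))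
    have h2 := (((hasDerivAt_id x).const_mul β).mul_const (μ₁ ^ (β - 1)))
    have h3 := ((h1.sub h2).add_const ((β - 1) * μ₁ ^ β)).div_const (β * (β - 1))
    refine h3.congr_deriv ?_
    field_simp
  apply StrictMonoOn.strictConvexOn_of_deriv (convex_Ioi 0)
  · intro x hx
    exact (hd x hx).continuousAt.continuousWithinAt
  · rw [interior_Ioi]
    intro x hx y hy hxy
    rw [(hd x hx).deriv, (hd y hy).deriv]
    rcases lt_or_gt_of_ne hb with h | h
    · have := Real.rpow_lt_rpow_of_neg hx hxy h
      exact div_lt_div_of_neg_of_lt h (by linarith)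
    · have := Real.rpow_lt_rpow (le_of_lt hx) hxy h
      exact div_lt_div_of_pos_right (by linarith) h
end

section
/- Let μ₁, μ₂ > 0. Then the limit as β → 1 (over β ∉ {0,1}) of D^d_β(μ₂‖μ₁) exists and equals μ₂ · log(μ₂/μ₁) − μ₂ + μ₁ (the dual Kullback–Leibler divergence of the Poisson model). -/
theorem dualDiv_tendsto_one (μ₁ μ₂ : ℝ) (hμ₁ : 0 < μ₁) (hμ₂ : 0 < μ₂) :
    Filter.Tendsto (fun β : ℝ => dualDiv β μ₁ μ₂)
      (nhdsWithin 1 ({0, 1} : Set ℝ)ᶜ)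
      (nhds (μ₂ * Real.log (μ₂ / μ₁) - μ₂ + μ₁)) := by
  have h2 : HasDerivAt (fun β : ℝ => μ₂ ^ β) (μ₂ * Real.log μ₂) 1 := by
    simpa using (Real.hasStrictDerivAt_const_rpow hμ₂ 1).hasDerivAt
  have h1 : HasDerivAt (fun β : ℝ => μ₁ ^ β) (μ₁ * Real.log μ₁) 1 := by
    simpa using (Real.hasStrictDerivAt_const_rpow hμ₁ 1).hasDerivAt
  have h3 : HasDerivAt (fun β : ℝ => μ₁ ^ (β - 1)) (Real.log μ₁) 1 := by
    have h := (Real.hasStrictDerivAt_const_rpow hμ₁ ((1 : ℝ) - 1)).hasDerivAt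
    simpa using h.comp_sub_const 1 1
  have hN : HasDerivAt
      (fun β : ℝ => μ₂ ^ β - β * μ₂ * μ₁ ^ (β - 1) + (β - 1) * μ₁ ^ β)
      (μ₂ * Real.log (μ₂ / μ₁) - μ₂ + μ₁) 1 := by
    have h := (h2.sub (((hasDerivAt_id (1 : ℝ)).mul_const μ₂).mul h3)).add
      (((hasDerivAt_id (1 : ℝ)).sub_const 1).mul h1)
    refine h.congr_deriv ?_
    rw [Real.log_div hμ₂.ne' hμ₁.ne']
    simp
    ring
  have hs : Filter.Tendsto _ (nhdsWithin 1 ({0, 1} : Set ℝ)ᶜ) _ :=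
    (hasDerivAt_iff_tendsto_slope.1 hN).mono_left
      (nhdsWithin_mono _ (by intro x hx; simp at hx ⊢; exact hx.2))
  have hi : Filter.Tendsto (fun β : ℝ => β) (nhdsWithin 1 ({0, 1} : Set ℝ)ᶜ) (nhds 1) :=
    Filter.tendsto_id.mono_left nhdsWithin_le_nhds
  have hd := hs.div hi one_ne_zero
  rw [div_one] at hd
  refine hd.congr ?_
  intro β
  simp only [Pi.div_apply, slope_def_field, dualDiv]
  simp [div_div, mul_comm]
end

section
/- Let μ₁, μ₂ > 0. Then the limit as β → 0 (over β ∉ {0,1}) of D^d_β(μ₂‖μ₁) exists and equals −log(μ₂/μ₁) + μ₂/μ₁ − 1 (the dual version of the Itakura–Saito divergence, i.e., the dual Kullback–Leibler divergence of the gamma model). -/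
theorem dualDiv_tendsto_zero (μ₁ μ₂ : ℝ) (hμ₁ : 0 < μ₁) (hμ₂ : 0 < μ₂) :
    Filter.Tendsto (fun β : ℝ => dualDiv β μ₁ μ₂)
      (nhdsWithin 0 ({0, 1} : Set ℝ)ᶜ)
      (nhds (-Real.log (μ₂ / μ₁) + μ₂ / μ₁ - 1)) := by
  have h1 : HasDerivAt (fun β : ℝ => μ₁ ^ β) (μ₁ ^ (0:ℝ) * Real.log μ₁) 0 :=
    (Real.hasStrictDerivAt_const_rpow hμ₁ 0).hasDerivAt
  have h2 : HasDerivAt (fun β : ℝ => μ₂ ^ β) (μ₂ ^ (0:ℝ) * Real.log μ₂) 0 :=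
    (Real.hasStrictDerivAt_const_rpow hμ₂ 0).hasDerivAt
  have h3 : HasDerivAt (fun β : ℝ => β * (μ₂ / μ₁)) (1 * (μ₂ / μ₁)) 0 :=
    (hasDerivAt_id (0:ℝ)).mul_const _
  have h4 : HasDerivAt (fun β : ℝ => β - 1) 1 0 := (hasDerivAt_id (0:ℝ)).sub_const 1
  have h5 := (h2.fun_sub (h3.fun_mul h1)).fun_add (h4.fun_mul h1)
  have h6 := (hasDerivAt_iff_tendsto_slope.1 h5).mono_left
    (nhdsWithin_mono (0:ℝ) (show ({0, 1} : Set ℝ)ᶜ ⊆ {0}ᶜ by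
      intro x hx; simp at hx ⊢; exact hx.1))
  have h7 : Filter.Tendsto (fun β : ℝ => (β - 1)⁻¹) (nhdsWithin 0 ({0, 1} : Set ℝ)ᶜ)
      (nhds ((0 - 1 : ℝ)⁻¹)) :=
    (h4.continuousAt.inv₀ (by norm_num)).tendsto.mono_left nhdsWithin_le_nhds
  have h8 := h6.mul h7
  have e : -Real.log (μ₂ / μ₁) + μ₂ / μ₁ - 1 = (μ₂ ^ (0:ℝ) * Real.log μ₂ -
      (1 * (μ₂ / μ₁) * μ₁ ^ (0:ℝ) + 0 * (μ₂ / μ₁) * (μ₁ ^ (0:ℝ) * Real.log μ₁)) +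
      (1 * μ₁ ^ (0:ℝ) + (0 - 1) * (μ₁ ^ (0:ℝ) * Real.log μ₁))) * (0 - 1 : ℝ)⁻¹ := by
    rw [Real.log_div hμ₂.ne' hμ₁.ne']
    simp only [Real.rpow_zero]
    norm_num
    ring
  rw [e]
  refine h8.congr' ?_
  filter_upwards [self_mem_nhdsWithin] with β hβ
  simp only [Set.mem_compl_iff, Set.mem_insert_iff, Set.mem_singleton_iff, not_or] at hβ
  have hb : β - 1 ≠ 0 := sub_ne_zero.2 hβ.2
  have hb0 := hβ.1
  simp only [slope_def_field, dualDiv, Real.rpow_zero, Real.rpow_sub_one hμ₁.ne']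
  field_simp
  ring
end

section
/- Let α ∈ ℝ with α < 1 or α > 2, let p, k ≥ 1, fix a column index j, and let V_{ij} > 0 (i = 1…p), W_{ia} > 0 (i = 1…p, a = 1…k), H^t_{aj} > 0 (a = 1…k) be given. Define F(H) = Σ_i [ (Σ_a W_{ia} H_{aj})^{2−α} − (2−α) V_{ij}^{1−α} (Σ_a W_{ia} H_{aj}) + (1−α) V_{ij}^{2−α} ] for H ∈ (0,∞)^k, and define G(H, H^t) = Σ_i [ −(2−α) V_{ij}^{1−α} (Σ_a W_{ia} H_{aj}) + (1−α) V_{ij}^{2−α} ] + Σ_{i,a} (W_{ia} H_{aj})^{2−α} (W_{ia} H^t_{aj} / Σ_b W_{ib} H^t_{bj})^{α−1}. Then G(H, H^t) ≥ F(H) for all H ∈ (0,∞)^k, and G(H, H) = F(H). -/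
lemma tangent_aux (q x : ℝ) (hq : 1 < q ∨ q < 0) (hx : 0 < x) : 1 + q * (x - 1) ≤ x ^ q := by
  rcases hq with h | h
  · have := one_add_mul_self_le_rpow_one_add (s := x - 1) (by linarith) h.le
    simpa using this
  · rw [Real.rpow_def_of_pos hx]
    have h1 := Real.add_one_le_exp (Real.log x * q)
    have h2 := Real.log_le_sub_one_of_pos hx
    nlinarith

lemma term_aux (q x l S : ℝ) (hq : 1 < q ∨ q < 0) (hx : 0 < x) (hl : 0 < l) (hS : 0 < S) :
    S ^ q * (l + q * (x / S - l)) ≤ x ^ q * l ^ (1 - q) := by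
  have h := tangent_aux q (x / (l * S)) hq (by positivity)
  have e : x ^ q * l ^ (1 - q) = S ^ q * l * (x / (l * S)) ^ q := by
    rw [Real.div_rpow hx.le (by positivity), Real.mul_rpow hl.le hS.le, Real.rpow_sub hl,
      Real.rpow_one]
    have := (Real.rpow_pos_of_pos hl q).ne'
    have := (Real.rpow_pos_of_pos hS q).ne'
    field_simp
  rw [e]
  have h3 := mul_le_mul_of_nonneg_left h (show 0 ≤ S ^ q * l by positivity)
  refine le_trans (le_of_eq ?_) h3
  generalize S ^ q = T
  field_simp

/-- `G` is an auxiliary function for the per-column objective `F` in NMF based on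
generalized dual Kullback–Leibler divergence, for `α < 1` or `α > 2`. -/
theorem auxiliary_function_for_dualKL (α : ℝ) (hα : α < 1 ∨ 2 < α) (p k : ℕ)
    (hp : 1 ≤ p) (hk : 1 ≤ k)
    (V : Fin p → ℝ) (W : Fin p → Fin k → ℝ) (Ht : Fin k → ℝ)
    (hV : ∀ i, 0 < V i) (hW : ∀ i a, 0 < W i a) (hHt : ∀ a, 0 < Ht a) :
    let F : (Fin k → ℝ) → ℝ := fun H => ∑ i,
      ((∑ a, W i a * H a) ^ (2 - α) - (2 - α) * V i ^ (1 - α) * (∑ a, W i a * H a)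
        + (1 - α) * V i ^ (2 - α))
    let G : (Fin k → ℝ) → (Fin k → ℝ) → ℝ := fun H H' =>
      (∑ i, (-(2 - α) * V i ^ (1 - α) * (∑ a, W i a * H a) + (1 - α) * V i ^ (2 - α)))
        + ∑ i, ∑ a, (W i a * H a) ^ (2 - α) * (W i a * H' a / ∑ b, W i b * H' b) ^ (α - 1)
    (∀ H : Fin k → ℝ, (∀ a, 0 < H a) → F H ≤ G H Ht) ∧
      (∀ H : Fin k → ℝ, (∀ a, 0 < H a) → G H H = F H) := by
  intro F G
  have hne : Nonempty (Fin k) := ⟨⟨0, hk⟩⟩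
  have hpos : ∀ H : Fin k → ℝ, (∀ a, 0 < H a) → ∀ i, 0 < ∑ a, W i a * H a := fun H hH i =>
    Finset.sum_pos (fun a _ => mul_pos (hW i a) (hH a)) Finset.univ_nonempty
  constructor
  · intro H hH
    simp only [F, G]
    rw [← Finset.sum_add_distrib]
    refine Finset.sum_le_sum fun i _ => ?_
    have key : (∑ a, W i a * H a) ^ (2 - α) ≤
        ∑ a, (W i a * H a) ^ (2 - α) * (W i a * Ht a / ∑ b, W i b * Ht b) ^ (α - 1) := by
      have hS := hpos H hH i
      have hT := hpos Ht hHt i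
      have hx := Finset.sum_le_sum (s := Finset.univ) fun a _ =>
        term_aux (2 - α) (W i a * H a) (W i a * Ht a / ∑ b, W i b * Ht b) _
        (by rcases hα with h | h
            · left; linarith
            · right; linarith)
        (mul_pos (hW i a) (hH a)) (div_pos (mul_pos (hW i a) (hHt a)) hT) hS
      rw [show 1 - (2 - α) = α - 1 by ring] at hx
      refine le_trans (le_of_eq ?_) hx
      rw [← Finset.mul_sum, Finset.sum_add_distrib, ← Finset.mul_sum, Finset.sum_sub_distrib,
        ← Finset.sum_div, ← Finset.sum_div, div_self hS.ne', div_self hT.ne']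
      ring
    linarith
  · intro H hH
    simp only [F, G]
    rw [← Finset.sum_add_distrib]
    refine Finset.sum_congr rfl fun i _ => ?_
    have hS := hpos H hH i
    have key : ∑ a, (W i a * H a) ^ (2 - α) * (W i a * H a / ∑ b, W i b * H b) ^ (α - 1)
        = (∑ a, W i a * H a) ^ (2 - α) := by
      have : ∀ a ∈ Finset.univ,
          (W i a * H a) ^ (2 - α) * (W i a * H a / ∑ b, W i b * H b) ^ (α - 1)
          = (W i a * H a) * (∑ b, W i b * H b) ^ (1 - α) := by
        intro a _
        have hx := mul_pos (hW i a) (hH a)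
        rw [Real.div_rpow hx.le hS.le, div_eq_mul_inv, ← Real.rpow_neg hS.le, ← mul_assoc,
          ← Real.rpow_add hx, show 2 - α + (α - 1) = 1 by ring, Real.rpow_one, neg_sub]
      rw [Finset.sum_congr rfl this, ← Finset.sum_mul, show 2 - α = 1 + (1 - α) by ring,
        Real.rpow_add hS, Real.rpow_one]
    rw [key]
    ring
end

section
/- Let α ∈ ℝ with α ≠ 1 and α ≠ 2, let p, n, k ≥ 1, and let V ∈ ℝ^{p×n}, W ∈ ℝ^{p×k} and H ∈ ℝ^{k×n} have strictly positive entries. Define the update map U(H)_{aj} = H_{aj} · ( Σ_i (1/Σ_b W_{ib} H_{bj})^{α−1} W_{ia} / Σ_i W_{ia} V_{ij}^{1−α} )^{1/(α−1)}. Then H is a fixed point of U (i.e., U(H) = H) if and only if for every a and j, Σ_i W_{ia} (Σ_b W_{ib} H_{bj})^{1−α} = Σ_i W_{ia} V_{ij}^{1−α}, i.e., if and only if the partial derivative of D^d_α(WH‖V) with respect to each entry H_{aj} vanishes, so that H is a stationary point of the divergence. -/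
/-- Generalized dual Kullback–Leibler divergence `D^d_α(WH‖V)` between the
reconstruction `WH` and the positive matrix `V`. -/
noncomputable def dualDivNMF (α : ℝ) {p n k : ℕ} (V : Fin p → Fin n → ℝ)
    (W : Fin p → Fin k → ℝ) (H : Fin k → Fin n → ℝ) : ℝ :=
  ∑ i, ∑ j,
    ((∑ b, W i b * H b j) ^ (2 - α) - (2 - α) * (∑ b, W i b * H b j) * V i j ^ (1 - α)
      + (1 - α) * V i j ^ (2 - α)) / ((1 - α) * (2 - α))

theorem dualDiv_hasDerivAt_aux (α : ℝ) (hα1 : α ≠ 1) (hα2 : α ≠ 2) (p n k : ℕ)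
    (hk : 1 ≤ k)
    (V : Fin p → Fin n → ℝ) (W : Fin p → Fin k → ℝ) (H : Fin k → Fin n → ℝ)
    (hW : ∀ i a, 0 < W i a) (hH : ∀ a j, 0 < H a j) (a : Fin k) (j : Fin n) :
    HasDerivAt
          (fun x : ℝ =>
            dualDivNMF α V W (fun a' j' => if a' = a ∧ j' = j then x else H a' j'))
          ((∑ i, W i a * (∑ b, W i b * H b j) ^ (1 - α) - ∑ i, W i a * V i j ^ (1 - α))
            / (1 - α)) (H a j) := by
  have h1 : (1 - α) ≠ 0 := sub_ne_zero.mpr hα1.symm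
  have h2 : (2 - α) ≠ 0 := sub_ne_zero.mpr hα2.symm
  have hS : ∀ i j, 0 < ∑ b, W i b * H b j := fun i j =>
    Finset.sum_pos (fun b _ => mul_pos (hW i b) (hH b j)) ⟨⟨0, hk⟩, Finset.mem_univ _⟩
  have hval : ∀ i j', (∑ b, W i b * (if b = a ∧ j' = j then H a j else H b j'))
      = ∑ b, W i b * H b j' := by
    intro i j'
    refine Finset.sum_congr rfl fun b _ => ?_
    split_ifs with h
    · rw [h.1, h.2]
    · rfl
  have hin : ∀ i j', HasDerivAt
      (fun x : ℝ => ∑ b, W i b * (if b = a ∧ j' = j then x else H b j'))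
      (if j' = j then W i a else 0) (H a j) := by
    intro i j'
    have : HasDerivAt
      (fun x : ℝ => ∑ b, W i b * (if b = a ∧ j' = j then x else H b j'))
      (∑ b, W i b * (if b = a ∧ j' = j then 1 else 0)) (H a j) := by
      refine HasDerivAt.fun_sum fun b _ => HasDerivAt.const_mul _ ?_
      split_ifs
      · exact hasDerivAt_id _
      · exact hasDerivAt_const _ _
    convert this using 1
    by_cases h : j' = j <;> simp [h]
  have hterm : ∀ i j', HasDerivAt (fun x : ℝ =>
      ((∑ b, W i b * (if b = a ∧ j' = j then x else H b j')) ^ (2 - α)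
       - (2 - α) * (∑ b, W i b * (if b = a ∧ j' = j then x else H b j')) * V i j' ^ (1 - α)
      + (1 - α) * V i j' ^ (2 - α)) / ((1 - α) * (2 - α)))
      (if j' = j then (W i a * (∑ b, W i b * H b j) ^ (1 - α) - W i a * V i j ^ (1 - α))
        / (1 - α) else 0) (H a j) := by
    intro i j'
    have hd := hin i j'
    have hp := hd.rpow_const (p := 2 - α) (Or.inl (by rw [hval]; exact (hS i j').ne'))
    have := (((hp.sub ((hd.const_mul (2 - α)).mul_const (V i j' ^ (1 - α)))).add_const
      ((1 - α) * V i j' ^ (2 - α))).div_const ((1 - α) * (2 - α)))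
    refine HasDerivAt.congr_deriv this ?_
    rw [hval]
    by_cases h : j' = j
    · subst h
      rw [show 2 - α - 1 = 1 - α by ring]
      simp only [if_true]
      field_simp
    · simp [h]
  have := HasDerivAt.fun_sum (u := Finset.univ) fun i _ =>
    HasDerivAt.fun_sum (u := Finset.univ) fun j' _ => hterm i j'
  unfold dualDivNMF
  refine HasDerivAt.congr_deriv this ?_
  simp [← Finset.sum_sub_distrib, Finset.sum_div]

/-- `H` is a fixed point of the multiplicative update map `U` if and only if the
stationarity condition holds, i.e. iff every partial derivative of the divergence
with respect to an entry of `H` vanishes. -/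
theorem fixed_point_iff_stationary (α : ℝ) (hα1 : α ≠ 1) (hα2 : α ≠ 2) (p n k : ℕ)
    (hp : 1 ≤ p) (hn : 1 ≤ n) (hk : 1 ≤ k)
    (V : Fin p → Fin n → ℝ) (W : Fin p → Fin k → ℝ) (H : Fin k → Fin n → ℝ)
    (hV : ∀ i j, 0 < V i j) (hW : ∀ i a, 0 < W i a) (hH : ∀ a j, 0 < H a j) :
    let U : Fin k → Fin n → ℝ := fun a j => H a j *
      ((∑ i, (1 / ∑ b, W i b * H b j) ^ (α - 1) * W i a) /
        (∑ i, W i a * V i j ^ (1 - α))) ^ (1 / (α - 1))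
    (U = H ↔ ∀ (a : Fin k) (j : Fin n),
        ∑ i, W i a * (∑ b, W i b * H b j) ^ (1 - α) = ∑ i, W i a * V i j ^ (1 - α)) ∧
    (U = H ↔ ∀ (a : Fin k) (j : Fin n),
        HasDerivAt
          (fun x : ℝ =>
            dualDivNMF α V W (fun a' j' => if a' = a ∧ j' = j then x else H a' j'))
          0 (H a j)) := by
  intro U
  have h1 : (1 - α) ≠ 0 := sub_ne_zero.mpr hα1.symm
  have h1' : (α - 1) ≠ 0 := sub_ne_zero.mpr hα1
  have hS : ∀ i j, 0 < ∑ b, W i b * H b j := fun i j =>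
    Finset.sum_pos (fun b _ => mul_pos (hW i b) (hH b j)) ⟨⟨0, hk⟩, Finset.mem_univ _⟩
  have key : U = H ↔ ∀ (a : Fin k) (j : Fin n),
      ∑ i, W i a * (∑ b, W i b * H b j) ^ (1 - α) = ∑ i, W i a * V i j ^ (1 - α) := by
    rw [funext_iff]
    refine forall_congr' fun a => ?_
    rw [funext_iff]
    refine forall_congr' fun j => ?_
    have hA : 0 < ∑ i, W i a * (∑ b, W i b * H b j) ^ (1 - α) :=
      Finset.sum_pos (fun i _ => mul_pos (hW i a) (Real.rpow_pos_of_pos (hS i j) _))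
        ⟨⟨0, hp⟩, Finset.mem_univ _⟩
    have hB : 0 < ∑ i, W i a * V i j ^ (1 - α) :=
      Finset.sum_pos (fun i _ => mul_pos (hW i a) (Real.rpow_pos_of_pos (hV i j) _))
        ⟨⟨0, hp⟩, Finset.mem_univ _⟩
    have hE : ∑ i, (1 / ∑ b, W i b * H b j) ^ (α - 1) * W i a
        = ∑ i, W i a * (∑ b, W i b * H b j) ^ (1 - α) := by
      refine Finset.sum_congr rfl fun i _ => ?_
      rw [mul_comm, one_div, Real.inv_rpow (hS i j).le, ← Real.rpow_neg (hS i j).le, neg_sub]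
    simp only [U]
    rw [hE, mul_eq_left₀ (hH a j).ne', ← div_eq_one_iff_eq hB.ne']
    constructor
    · intro h
      exact (Real.rpow_left_inj (div_pos hA hB).le zero_le_one (one_div_ne_zero h1')).mp
        (h.trans (Real.one_rpow _).symm)
    · intro h
      rw [h, Real.one_rpow]
  refine ⟨key, key.trans (forall_congr' fun a => forall_congr' fun j => ?_)⟩
  have hd := dualDiv_hasDerivAt_aux α hα1 hα2 p n k hk V W H hW hH a j
  constructor
  · intro h
    rw [h, sub_self, zero_div] at hd
    exact hd
  · intro h
    have := hd.unique h
    rw [div_eq_zero_iff, or_iff_left h1, sub_eq_zero] at this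
    exact this
end

section
/- Let α ∈ ℝ with α < 1 or α > 2, let p, k ≥ 1, fix a column index j, and let V_{ij} > 0, W_{ia} > 0, H^t_{aj} > 0 be given. With G(H, H^t) = Σ_i [ −(2−α) V_{ij}^{1−α} (Σ_a W_{ia} H_{aj}) + (1−α) V_{ij}^{2−α} ] + Σ_{i,a} (W_{ia} H_{aj})^{2−α} (W_{ia} H^t_{aj} / Σ_b W_{ib} H^t_{bj})^{α−1}, for each a the unique critical point in H_{aj} ∈ (0,∞) of G(·, H^t), obtained by solving ∂G/∂H_{aj} = 0, is H_{aj} = H^t_{aj} · ( Σ_i (1/Σ_b W_{ib} H^t_{bj})^{α−1} W_{ia} / Σ_i W_{ia} V_{ij}^{1−α} )^{1/(α−1)}, and G(·, H^t) attains its minimum over (0,∞) in each coordinate H_{aj} at this point. -/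
theorem aux_sum_update {k : ℕ} (a : Fin k) (H : Fin k → ℝ) (x : ℝ) (f : Fin k → ℝ → ℝ) :
    ∑ c, f c (Function.update H a x c) = f a x + ∑ c ∈ Finset.univ.erase a, f c (H c) := by
  rw [← Finset.add_sum_erase _ _ (Finset.mem_univ a)]
  congr 1
  · simp
  · apply Finset.sum_congr rfl
    intro c hc
    rw [Function.update_of_ne (Finset.ne_of_mem_erase hc)]

theorem aux_bern (q s : ℝ) (hq : q < 0 ∨ 1 < q) (hs : 0 < s) : 1 + q * (s - 1) ≤ s ^ q := by
  rcases hq with hq | hq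
  · have h1 := Real.add_one_le_exp (Real.log s * q)
    have h2 := Real.log_le_sub_one_of_pos hs
    rw [Real.rpow_def_of_pos hs]
    nlinarith
  · have := one_add_mul_self_le_rpow_one_add (s := s - 1) (by linarith) hq.le
    simpa using this

theorem aux_main (q A B C h : ℝ) (hq : q < 0 ∨ 1 < q) (hA : 0 < A) (hh : 0 < h)
    (hAB : A * h ^ (q - 1) = B) (g : ℝ → ℝ)
    (hg : ∀ x, 0 < x → g x = C - q * B * x + A * x ^ q) :
    (∀ x ∈ Set.Ioi (0 : ℝ), (HasDerivAt g 0 x ↔ x = h)) ∧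
      (∀ x ∈ Set.Ioi (0 : ℝ), g h ≤ g x) := by
  have hq0 : q ≠ 0 := by rintro rfl; rcases hq with h | h <;> linarith
  have hq1 : q - 1 ≠ 0 := by rcases hq with h | h <;> [exact (by linarith : q - 1 < 0).ne; exact (by linarith : 0 < q - 1).ne']
  constructor
  · intro x hx
    have hx' : 0 < x := hx
    have hd : HasDerivAt g (-(q * B) + A * (q * x ^ (q - 1))) x := by
      have h1 : HasDerivAt (fun y => C - q * B * y + A * y ^ q)
          (-(q * B) + A * (q * x ^ (q - 1))) x := by
        have h2 := ((hasDerivAt_id x).const_mul (q * B)).const_sub C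
        have h3 := (Real.hasDerivAt_rpow_const (p := q) (Or.inl hx'.ne')).const_mul A
        refine HasDerivAt.congr_deriv (h2.add h3) ?_
        ring
      apply h1.congr_of_eventuallyEq
      filter_upwards [Ioi_mem_nhds hx'] with y hy using hg y hy
    constructor
    · intro h0
      have he := hd.unique h0
      have : q * A * (x ^ (q - 1) - h ^ (q - 1)) = 0 := by rw [← hAB] at he; linarith
      have h4 : x ^ (q - 1) = h ^ (q - 1) := by
        have := (mul_eq_zero.1 this).resolve_left (mul_ne_zero hq0 hA.ne')
        linarith
      exact (Real.rpow_left_inj hx'.le hh.le hq1).1 h4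
    · rintro rfl
      convert hd using 1
      rw [← hAB]; ring
  · intro x hx
    have hx' : 0 < x := hx
    rw [hg x hx', hg h hh]
    have hb := aux_bern q (x / h) hq (div_pos hx' hh)
    rw [Real.div_rpow hx'.le hh.le, le_div_iff₀ (Real.rpow_pos_of_pos hh q)] at hb
    have e : h ^ q = h ^ (q - 1) * h := by
      rw [Real.rpow_sub_one hh.ne']; field_simp
    have e2 : (1 + q * (x / h - 1)) * h ^ q = h ^ q + q * h ^ (q - 1) * (x - h) := by
      rw [e]; field_simp
    rw [e2] at hb
    have := mul_le_mul_of_nonneg_left hb hA.le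
    rw [← hAB]
    nlinarith

/-- The multiplicative update value `H^{t+1}_{aj}` is the unique critical point of the
auxiliary function `G(·, H^t)` in the coordinate `H_{aj}` on `(0,∞)`, and `G(·, H^t)`
attains its minimum in that coordinate there. -/
theorem auxiliary_critical_point (α : ℝ) (hα : α < 1 ∨ 2 < α) (p k : ℕ)
    (hp : 1 ≤ p) (hk : 1 ≤ k)
    (V : Fin p → ℝ) (W : Fin p → Fin k → ℝ) (Ht : Fin k → ℝ)
    (hV : ∀ i, 0 < V i) (hW : ∀ i a, 0 < W i a) (hHt : ∀ a, 0 < Ht a)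
    (a : Fin k) (H : Fin k → ℝ) (hH : ∀ b, 0 < H b) :
    let G : (Fin k → ℝ) → ℝ := fun H' =>
      (∑ i, (-(2 - α) * V i ^ (1 - α) * (∑ c, W i c * H' c) + (1 - α) * V i ^ (2 - α)))
        + ∑ i, ∑ c, (W i c * H' c) ^ (2 - α) * (W i c * Ht c / ∑ b, W i b * Ht b) ^ (α - 1)
    let g : ℝ → ℝ := fun x => G (Function.update H a x)
    let hstar : ℝ := Ht a *
      ((∑ i, (1 / ∑ b, W i b * Ht b) ^ (α - 1) * W i a) /
        (∑ i, W i a * V i ^ (1 - α))) ^ (1 / (α - 1))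
    0 < hstar ∧ (∀ x ∈ Set.Ioi (0 : ℝ), (HasDerivAt g 0 x ↔ x = hstar)) ∧
      (∀ x ∈ Set.Ioi (0 : ℝ), g hstar ≤ g x) := by
  intro G g hstar
  have hne : (Finset.univ : Finset (Fin p)).Nonempty := ⟨⟨0, hp⟩, Finset.mem_univ _⟩
  have hS : ∀ i, 0 < ∑ b, W i b * Ht b := fun i =>
    Finset.sum_pos (fun b _ => mul_pos (hW i b) (hHt b)) ⟨a, Finset.mem_univ _⟩
  have hN : 0 < ∑ i, (1 / ∑ b, W i b * Ht b) ^ (α - 1) * W i a :=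
    Finset.sum_pos (fun i _ => mul_pos (Real.rpow_pos_of_pos (one_div_pos.2 (hS i)) _) (hW i a)) hne
  have hB : 0 < ∑ i, W i a * V i ^ (1 - α) :=
    Finset.sum_pos (fun i _ => mul_pos (hW i a) (Real.rpow_pos_of_pos (hV i) _)) hne
  have hα1 : α - 1 ≠ 0 := by
    rcases hα with h | h <;> [exact (by linarith : α - 1 < 0).ne; exact (by linarith : 0 < α - 1).ne']
  have hs : 0 < hstar := mul_pos (hHt a) (Real.rpow_pos_of_pos (div_pos hN hB) _)
  refine ⟨hs, ?_⟩
  have hterm : ∀ i, W i a ^ (2 - α) * (W i a * Ht a / ∑ b, W i b * Ht b) ^ (α - 1)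
      = Ht a ^ (α - 1) * ((1 / ∑ b, W i b * Ht b) ^ (α - 1) * W i a) := by
    intro i
    have e1 : W i a * Ht a / ∑ b, W i b * Ht b = W i a * (Ht a * (1 / ∑ b, W i b * Ht b)) := by
      ring
    have e2 : W i a ^ (2 - α) * W i a ^ (α - 1) = W i a := by
      rw [← Real.rpow_add (hW i a)]; ring_nf; simp
    have hi := (one_div_pos.2 (hS i)).le
    rw [e1, Real.mul_rpow (hW i a).le (mul_nonneg (hHt a).le hi), Real.mul_rpow (hHt a).le hi,
      ← mul_assoc, e2]
    ring
  refine aux_main (2 - α) (Ht a ^ (α - 1) * ∑ i, (1 / ∑ b, W i b * Ht b) ^ (α - 1) * W i a)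
    (∑ i, W i a * V i ^ (1 - α))
    (∑ i, (-(2 - α) * V i ^ (1 - α) * (∑ c ∈ Finset.univ.erase a, W i c * H c)
        + (1 - α) * V i ^ (2 - α)
        + ∑ c ∈ Finset.univ.erase a,
          (W i c * H c) ^ (2 - α) * (W i c * Ht c / ∑ b, W i b * Ht b) ^ (α - 1)))
    hstar ?_ (mul_pos (Real.rpow_pos_of_pos (hHt a) _) hN) hs ?_ g ?_
  · rcases hα with h | h
    · right; linarith
    · left; linarith
  · have e : 2 - α - 1 = -(α - 1) := by ring
    have e3 : hstar ^ (α - 1) = Ht a ^ (α - 1) *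
      ((∑ i, (1 / ∑ b, W i b * Ht b) ^ (α - 1) * W i a) / (∑ i, W i a * V i ^ (1 - α))) := by
      simp only [hstar]
      rw [Real.mul_rpow (hHt a).le (Real.rpow_nonneg (div_pos hN hB).le _),
        ← Real.rpow_mul (div_pos hN hB).le, one_div_mul_cancel hα1, Real.rpow_one]
    rw [e, Real.rpow_neg hs.le, e3]
    have := Real.rpow_pos_of_pos (hHt a) (α - 1)
    generalize (∑ i, (1 / ∑ b, W i b * Ht b) ^ (α - 1) * W i a) = N at *
    generalize (∑ i, W i a * V i ^ (1 - α)) = B at *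
    generalize Ht a ^ (α - 1) = T at *
    field_simp
  · intro x hx
    simp only [g, G]
    rw [Finset.mul_sum, Finset.mul_sum, Finset.sum_mul, Finset.sum_mul, ← Finset.sum_add_distrib,
      ← Finset.sum_sub_distrib, ← Finset.sum_add_distrib]
    apply Finset.sum_congr rfl
    intro i _
    rw [aux_sum_update a H x (fun c y => W i c * y),
      aux_sum_update a H x (fun c y => (W i c * y) ^ (2 - α) *
        (W i c * Ht c / ∑ b, W i b * Ht b) ^ (α - 1)), ← hterm i, Real.mul_rpow (hW i a).le hx.le]
    ring
end

section
/- (Theorem 1, H-update) Let α ∈ ℝ with α ≠ 1 and α ≠ 2, let p, n, k ≥ 1, and let V ∈ ℝ^{p×n}, W ∈ ℝ^{p×k}, H^t ∈ ℝ^{k×n} have strictly positive entries. Define H^{t+1}_{aj} = H^t_{aj} · ( Σ_i (1/Σ_b W_{ib} H^t_{bj})^{α−1} W_{ia} / Σ_i W_{ia} V_{ij}^{1−α} )^{1/(α−1)}. Then D^d_α(W H^{t+1} ‖ V) ≤ D^d_α(W H^t ‖ V); i.e., the generalized dual Kullback–Leibler divergence is non-increasing under the multiplicative update rule for H. -/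
lemma aux_T (s u : ℝ) (h0 : s ≠ 0) (h1 : s ≠ 1) (hu : 0 < u) :
    1 / (s * (s - 1)) + (u - 1) / (s - 1) ≤ u ^ s / (s * (s - 1)) := by
  have h1' : s - 1 ≠ 0 := sub_ne_zero.mpr h1
  have key : 0 ≤ (u ^ s - (1 + s * (u - 1))) / (s * (s - 1)) := by
    have hc : (1 + (u - 1)) = u := by ring
    rcases lt_or_gt_of_ne h0 with hs | hs
    · apply div_nonneg _ (by nlinarith)
      have := Real.add_one_le_exp (s * Real.log u)
      have h2 := Real.log_le_sub_one_of_pos hu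
      rw [Real.rpow_def_of_pos hu, mul_comm (Real.log u)]
      nlinarith
    · rcases lt_or_gt_of_ne h1 with hs1 | hs1
      · apply div_nonneg_of_nonpos _ (by nlinarith)
        have := rpow_one_add_le_one_add_mul_self (s := u - 1) (by linarith) hs.le hs1.le
        rw [hc] at this
        linarith
      · apply div_nonneg _ (by nlinarith)
        have := one_add_mul_self_le_rpow_one_add (s := u - 1) (by linarith) hs1.le
        rw [hc] at this
        linarith
  have e : (u ^ s - (1 + s * (u - 1))) / (s * (s - 1)) =
      u ^ s / (s * (s - 1)) - (1 / (s * (s - 1)) + (u - 1) / (s - 1)) := by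
    field_simp
    try ring
  linarith

lemma aux_T2 (s x y : ℝ) (h0 : s ≠ 0) (h1 : s ≠ 1) (hx : 0 < x) (hy : 0 < y) :
    y ^ s / (s * (s - 1)) + y ^ (s - 1) / (s - 1) * (x - y) ≤ x ^ s / (s * (s - 1)) := by
  have h1' : s - 1 ≠ 0 := sub_ne_zero.mpr h1
  have h := aux_T s (x / y) h0 h1 (div_pos hx hy)
  have hys : 0 < y ^ s := Real.rpow_pos_of_pos hy s
  have h2 := mul_le_mul_of_nonneg_left h hys.le
  rw [Real.div_rpow hx.le hy.le] at h2
  rw [Real.rpow_sub_one hy.ne']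
  have e1 : y ^ s * (x ^ s / y ^ s / (s * (s - 1))) = x ^ s / (s * (s - 1)) := by
    field_simp
  have e2 : y ^ s * (1 / (s * (s - 1)) + (x / y - 1) / (s - 1)) =
      y ^ s / (s * (s - 1)) + y ^ s / y / (s - 1) * (x - y) := by
    field_simp
  rw [e1, e2] at h2
  exact h2

lemma aux_J {k : ℕ} (hk : 1 ≤ k) (s : ℝ) (h0 : s ≠ 0) (h1 : s ≠ 1) (w h r : Fin k → ℝ)
    (hw : ∀ b, 0 < w b) (hh : ∀ b, 0 < h b) (hr : ∀ b, 0 < r b) :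
    (∑ b, w b * (h b * r b)) ^ s / (s * (s - 1)) ≤
      ∑ b, w b * h b * (∑ b, w b * h b) ^ (s - 1) * (r b ^ s / (s * (s - 1))) := by
  have : Nonempty (Fin k) := ⟨⟨0, hk⟩⟩
  set y := ∑ b, w b * h b with hy
  set z := ∑ b, w b * (h b * r b) with hz
  have hy0 : 0 < y := Finset.sum_pos (fun b _ => mul_pos (hw b) (hh b)) Finset.univ_nonempty
  have hz0 : 0 < z := Finset.sum_pos
    (fun b _ => mul_pos (hw b) (mul_pos (hh b) (hr b))) Finset.univ_nonempty
  have hb : ∀ b, w b * h b / y * (z ^ s / (s * (s - 1)))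
      + z ^ (s - 1) / (s - 1) * (w b * (h b * r b) - w b * h b / y * z) ≤
      w b * h b * y ^ (s - 1) * (r b ^ s / (s * (s - 1))) := by
    intro b
    have h2 := mul_le_mul_of_nonneg_left
      (aux_T2 s (y * r b) z h0 h1 (mul_pos hy0 (hr b)) hz0)
      (div_pos (mul_pos (hw b) (hh b)) hy0).le
    rw [Real.mul_rpow hy0.le (hr b).le] at h2
    rw [Real.rpow_sub_one hy0.ne']
    refine le_trans (le_of_eq ?_) (h2.trans (le_of_eq ?_))
    · rw [mul_add]
      congr 1
      have : w b * (h b * r b) = w b * h b / y * (y * r b) := by field_simp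
      rw [this]; ring
    · ring
  have hs := Finset.sum_le_sum (fun b (_ : b ∈ Finset.univ) => hb b)
  refine le_trans (le_of_eq ?_) hs
  rw [Finset.sum_add_distrib, ← Finset.sum_mul, ← Finset.mul_sum, Finset.sum_sub_distrib,
    ← Finset.sum_mul, ← Finset.sum_div, ← hy, ← hz, div_self hy0.ne']
  ring

lemma aux_col {p k : ℕ} (hp : 1 ≤ p) (hk : 1 ≤ k) (s : ℝ) (h0 : s ≠ 0) (h1 : s ≠ 1)
    (W : Fin p → Fin k → ℝ) (h r : Fin k → ℝ) (c : Fin p → ℝ)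
    (hw : ∀ i b, 0 < W i b) (hh : ∀ b, 0 < h b) (hr : ∀ b, 0 < r b)
    (hB : ∀ b, ∑ i, W i b * c i = (∑ i, W i b * (∑ a, W i a * h a) ^ (s - 1)) * r b ^ (s - 1)) :
    ∑ i, ((∑ b, W i b * (h b * r b)) ^ s / (s * (s - 1))
        - (∑ b, W i b * (h b * r b)) * c i / (s - 1)) ≤
    ∑ i, ((∑ b, W i b * h b) ^ s / (s * (s - 1)) - (∑ b, W i b * h b) * c i / (s - 1)) := by
  have : Nonempty (Fin k) := ⟨⟨0, hk⟩⟩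
  have hy0 : ∀ i, 0 < ∑ b, W i b * h b := fun i =>
    Finset.sum_pos (fun b _ => mul_pos (hw i b) (hh b)) Finset.univ_nonempty
  set y : Fin p → ℝ := fun i => ∑ b, W i b * h b with hy
  set A : Fin k → ℝ := fun b => ∑ i, W i b * y i ^ (s - 1) with hA
  have hA0 : ∀ b, 0 ≤ A b := fun b => Finset.sum_nonneg fun i _ =>
    (mul_pos (hw i b) (Real.rpow_pos_of_pos (hy0 i) _)).le
  have lin : ∀ g : Fin k → ℝ, ∑ i, (∑ b, W i b * (h b * g b)) * c i / (s - 1) =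
      ∑ b, h b * g b * (A b * r b ^ (s - 1)) / (s - 1) := by
    intro g
    simp_rw [← Finset.sum_div, Finset.sum_mul]
    rw [Finset.sum_comm]
    congr 1
    refine Finset.sum_congr rfl fun b _ => ?_
    have := hB b
    simp only [hA, hy]
    rw [← this, Finset.mul_sum]
    exact Finset.sum_congr rfl fun i _ => by ring
  have pw : ∀ g : Fin k → ℝ, ∑ i, ∑ b, W i b * h b * y i ^ (s - 1) * g b =
      ∑ b, h b * A b * g b := by
    intro g
    rw [Finset.sum_comm]
    refine Finset.sum_congr rfl fun b _ => ?_
    simp only [hA]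
    rw [Finset.mul_sum, Finset.sum_mul]
    exact Finset.sum_congr rfl fun i _ => by ring
  have J : ∑ i, (∑ b, W i b * (h b * r b)) ^ s / (s * (s - 1)) ≤
      ∑ b, h b * A b * (r b ^ s / (s * (s - 1))) := by
    rw [← pw]
    exact Finset.sum_le_sum fun i _ => aux_J hk s h0 h1 (W i) h r (hw i) hh hr
  have E : ∑ i, y i ^ s / (s * (s - 1)) = ∑ b, h b * A b * (1 / (s * (s - 1))) := by
    rw [← pw]
    refine Finset.sum_congr rfl fun i _ => ?_
    rw [← Finset.sum_mul, ← Finset.sum_mul]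
    have : ∑ b, W i b * h b = y i := rfl
    rw [this, Real.rpow_sub_one (hy0 i).ne', mul_div_cancel₀ _ (hy0 i).ne']
    ring
  have L1 := lin r
  have L2 := lin (fun _ => 1)
  simp only [mul_one] at L2
  have M : ∑ b, (h b * A b * (r b ^ s / (s * (s - 1)))
      - h b * r b * (A b * r b ^ (s - 1)) / (s - 1)) ≤
      ∑ b, (h b * A b * (1 / (s * (s - 1))) - h b * (A b * r b ^ (s - 1)) / (s - 1)) := by
    refine Finset.sum_le_sum fun b _ => ?_
    have h2 := mul_le_mul_of_nonneg_left (aux_T2 s 1 (r b) h0 h1 one_pos (hr b))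
      (mul_nonneg (hh b).le (hA0 b))
    rw [Real.one_rpow] at h2
    have e : h b * A b * (r b ^ s / (s * (s - 1)) + r b ^ (s - 1) / (s - 1) * (1 - r b)) =
      h b * A b * (r b ^ s / (s * (s - 1))) - h b * r b * (A b * r b ^ (s - 1)) / (s - 1)
        + h b * (A b * r b ^ (s - 1)) / (s - 1) := by ring
    linarith
  rw [Finset.sum_sub_distrib, Finset.sum_sub_distrib] at M ⊢
  simp only [hy] at E L2
  linarith


/-- Theorem 1, H-update: the generalized dual KL divergence is non-increasing under the
multiplicative update rule for `H`. -/
theorem dualDivNMF_nonincreasing_H_update (α : ℝ) (hα1 : α ≠ 1) (hα2 : α ≠ 2)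
    (p n k : ℕ) (hp : 1 ≤ p) (hn : 1 ≤ n) (hk : 1 ≤ k)
    (V : Fin p → Fin n → ℝ) (W : Fin p → Fin k → ℝ) (Ht : Fin k → Fin n → ℝ)
    (hV : ∀ i j, 0 < V i j) (hW : ∀ i a, 0 < W i a) (hHt : ∀ a j, 0 < Ht a j) :
    let Hnext : Fin k → Fin n → ℝ := fun a j => Ht a j *
      ((∑ i, (1 / ∑ b, W i b * Ht b j) ^ (α - 1) * W i a) /
        (∑ i, W i a * V i j ^ (1 - α))) ^ (1 / (α - 1))
    dualDivNMF α V W Hnext ≤ dualDivNMF α V W Ht := by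


  intro Hnext
  have : Nonempty (Fin k) := ⟨⟨0, hk⟩⟩
  have : Nonempty (Fin p) := ⟨⟨0, hp⟩⟩
  unfold dualDivNMF
  rw [Finset.sum_comm, Finset.sum_comm (s := (Finset.univ : Finset (Fin p)))]
  refine Finset.sum_le_sum fun j _ => ?_
  have h10 : (1 - α) ≠ 0 := fun h => hα1 (by linarith)
  have h20 : (2 - α) ≠ 0 := fun h => hα2 (by linarith)
  have ha0 : (α - 1) ≠ 0 := fun h => hα1 (by linarith)
  have hs : (2 - α) - 1 = 1 - α := by ring
  have hy0 : ∀ i, 0 < ∑ b, W i b * Ht b j := fun i =>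
    Finset.sum_pos (fun b _ => mul_pos (hW i b) (hHt b j)) Finset.univ_nonempty
  have hNp : ∀ a, 0 < ∑ i, (1 / ∑ b, W i b * Ht b j) ^ (α - 1) * W i a := fun a =>
    Finset.sum_pos (fun i _ => mul_pos (Real.rpow_pos_of_pos (one_div_pos.mpr (hy0 i)) _)
      (hW i a)) Finset.univ_nonempty
  have hDp : ∀ a, 0 < ∑ i, W i a * V i j ^ (1 - α) := fun a =>
    Finset.sum_pos (fun i _ => mul_pos (hW i a) (Real.rpow_pos_of_pos (hV i j) _))
      Finset.univ_nonempty
  have col := aux_col hp hk (2 - α) h20 (fun h => hα1 (by linarith)) W (fun b => Ht b j)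
    (fun a => ((∑ i, (1 / ∑ b, W i b * Ht b j) ^ (α - 1) * W i a) /
        (∑ i, W i a * V i j ^ (1 - α))) ^ (1 / (α - 1))) (fun i => V i j ^ (1 - α))
    hW (fun b => hHt b j)
    (fun b => Real.rpow_pos_of_pos (div_pos (hNp b) (hDp b)) _) (by
      intro b
      have hN : ∑ i, W i b * (∑ a, W i a * Ht a j) ^ (1 - α) =
          ∑ i, (1 / ∑ b, W i b * Ht b j) ^ (α - 1) * W i b := by
        refine Finset.sum_congr rfl fun i _ => ?_
        rw [one_div, Real.inv_rpow (hy0 i).le, ← Real.rpow_neg (hy0 i).le, neg_sub, mul_comm]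
      have he : 1 / (α - 1) * (1 - α) = -1 := by field_simp; ring
      simp only [hs]
      rw [hN, ← Real.rpow_mul (div_pos (hNp b) (hDp b)).le, he, Real.rpow_neg_one, inv_div,
        mul_div_cancel₀ _ (hNp b).ne'])
  rw [hs] at col
  have e : ∀ x v : ℝ, ∀ d : ℝ, (x ^ (2 - α) - (2 - α) * x * v + (1 - α) * d) /
      ((1 - α) * (2 - α)) =
      (x ^ (2 - α) / ((2 - α) * (1 - α)) - x * v / (1 - α)) + d / (2 - α) := by
    intro x v d
    field_simp
  simp only [e]
  rw [Finset.sum_add_distrib, Finset.sum_add_distrib]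
  exact add_le_add col le_rfl
end

section
/- (Theorem 1, W-update) Let α ∈ ℝ with α ≠ 1 and α ≠ 2, let p, n, k ≥ 1, and let V ∈ ℝ^{p×n}, W^t ∈ ℝ^{p×k}, H ∈ ℝ^{k×n} have strictly positive entries. Define W^{t+1}_{ia} = W^t_{ia} · ( Σ_j (1/Σ_b W^t_{ib} H_{bj})^{α−1} H_{aj} / Σ_j H_{aj} V_{ij}^{1−α} )^{1/(α−1)}. Then D^d_α(W^{t+1} H ‖ V) ≤ D^d_α(W^t H ‖ V); i.e., the generalized dual Kullback–Leibler divergence is non-increasing under the multiplicative update rule for W. -/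
theorem bern_aux (β t : ℝ) (h0 : β ≠ 0) (h1 : β ≠ 1) (ht : 0 < t) :
    0 ≤ (t ^ β - 1 - β * (t - 1)) / ((β - 1) * β) := by
  have e : 1 + (t - 1) = t := by ring
  rcases lt_or_gt_of_ne h0 with h | h
  · apply div_nonneg
    · have hu : (-1 : ℝ) ≤ t⁻¹ - 1 := by
        have := inv_pos.mpr ht
        linarith
      have k := one_add_mul_self_le_rpow_one_add hu (p := 1 - β) (by linarith)
      rw [show 1 + (t⁻¹ - 1) = t⁻¹ by ring, Real.inv_rpow ht.le, ← Real.rpow_neg ht.le] at k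
      have k2 := mul_le_mul_of_nonneg_left k ht.le
      have e2 : t * t ^ (-(1 - β)) = t ^ β := by
        rw [show β = 1 + (-(1 - β)) by ring, Real.rpow_add ht, Real.rpow_one]
        ring_nf
      rw [e2] at k2
      have e3 : t * (1 + (1 - β) * (t⁻¹ - 1)) = 1 + β * (t - 1) := by
        field_simp
        ring
      linarith
    · nlinarith
  · rcases lt_or_gt_of_ne h1 with h' | h'
    · have k := rpow_one_add_le_one_add_mul_self (s := t - 1) (by linarith) h.le h'.le
      rw [e] at k
      apply div_nonneg_of_nonpos
      · linarith
      · nlinarith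
    · have k := one_add_mul_self_le_rpow_one_add (s := t - 1) (by linarith) h'.le
      rw [e] at k
      apply div_nonneg
      · linarith
      · nlinarith

theorem tangent_aux_s17 (α x y : ℝ) (h1 : α ≠ 1) (h2 : α ≠ 2) (hx : 0 < x) (hy : 0 < y) :
    x ^ (2 - α) / ((1 - α) * (2 - α)) + x ^ (1 - α) / (1 - α) * (y - x)
      ≤ y ^ (2 - α) / ((1 - α) * (2 - α)) := by
  have a1 : 1 - α ≠ 0 := sub_ne_zero.mpr h1.symm
  have a2 : 2 - α ≠ 0 := sub_ne_zero.mpr h2.symm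
  have k := bern_aux (2 - α) (y / x) a2 (by intro h; apply h1; linarith) (div_pos hy hx)
  have k2 := mul_nonneg k (Real.rpow_pos_of_pos hx (2 - α)).le
  rw [Real.div_rpow hy.le hx.le, show 2 - α - 1 = 1 - α by ring] at k2
  have hp := Real.rpow_pos_of_pos hx (1 - α)
  have e : x ^ (2 - α) = x * x ^ (1 - α) := by
    rw [show 2 - α = 1 + (1 - α) by ring, Real.rpow_add hx, Real.rpow_one]
  rw [e] at k2 ⊢
  have : (y ^ (2 - α) / (x * x ^ (1 - α)) - 1 - (2 - α) * (y / x - 1)) / ((1 - α) * (2 - α))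
      * (x * x ^ (1 - α)) = y ^ (2 - α) / ((1 - α) * (2 - α)) -
      (x * x ^ (1 - α) / ((1 - α) * (2 - α)) + x ^ (1 - α) / (1 - α) * (y - x)) := by
    field_simp
    ring
  linarith

theorem row_aux (α : ℝ) (h1 : α ≠ 1) (h2 : α ≠ 2) (n k : ℕ) (hk : 1 ≤ k)
    (v : Fin n → ℝ) (w r : Fin k → ℝ) (H : Fin k → Fin n → ℝ)
    (hw : ∀ a, 0 < w a) (hr : ∀ a, 0 < r a) (hH : ∀ a j, 0 < H a j)
    (hrA : ∀ a, r a ^ (1 - α) * ∑ j, (∑ b, w b * H b j) ^ (1 - α) * H a j = ∑ j, H a j * v j) :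
    ∑ j, (∑ b, w b * r b * H b j) ^ (2 - α) / ((1 - α) * (2 - α))
      - ∑ j, (∑ b, w b * r b * H b j) * v j / (1 - α) ≤
    ∑ j, (∑ b, w b * H b j) ^ (2 - α) / ((1 - α) * (2 - α))
      - ∑ j, (∑ b, w b * H b j) * v j / (1 - α) := by
  have a1 : 1 - α ≠ 0 := sub_ne_zero.mpr h1.symm
  have a2 : 2 - α ≠ 0 := sub_ne_zero.mpr h2.symm
  have hne : (Finset.univ : Finset (Fin k)).Nonempty := ⟨⟨0, hk⟩, Finset.mem_univ _⟩
  have hs : ∀ j, 0 < ∑ b, w b * H b j := fun j =>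
    Finset.sum_pos (fun b _ => mul_pos (hw b) (hH b j)) hne
  have hs' : ∀ j, 0 < ∑ b, w b * r b * H b j := fun j =>
    Finset.sum_pos (fun b _ => mul_pos (mul_pos (hw b) (hr b)) (hH b j)) hne
  set s : Fin n → ℝ := fun j => ∑ b, w b * H b j with hsd
  set s' : Fin n → ℝ := fun j => ∑ b, w b * r b * H b j with hsd'
  change ∀ j, 0 < s j at hs
  change ∀ j, 0 < s' j at hs'
  change ∀ a, r a ^ (1 - α) * ∑ j, s j ^ (1 - α) * H a j = ∑ j, H a j * v j at hrA
  change ∑ j, s' j ^ (2 - α) / ((1 - α) * (2 - α)) - ∑ j, s' j * v j / (1 - α) ≤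
    ∑ j, s j ^ (2 - α) / ((1 - α) * (2 - α)) - ∑ j, s j * v j / (1 - α)
  have es : ∀ j, s j ^ (2 - α) = s j * s j ^ (1 - α) := fun j => by
    rw [show 2 - α = 1 + (1 - α) by ring, Real.rpow_add (hs j), Real.rpow_one]
  have J : ∀ j, s' j ^ (2 - α) / ((1 - α) * (2 - α)) ≤
      ∑ b, w b * (s j ^ (1 - α) * H b j) * (r b ^ (2 - α) / ((1 - α) * (2 - α))) := by
    intro j
    have hsj := hs j
    have key : ∑ b, w b * H b j / s j * (s' j ^ (2 - α) / ((1 - α) * (2 - α))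
        + s' j ^ (1 - α) / (1 - α) * (s j * r b - s' j)) ≤
        ∑ b, w b * (s j ^ (1 - α) * H b j) * (r b ^ (2 - α) / ((1 - α) * (2 - α))) := by
      apply Finset.sum_le_sum
      intro b _
      have t := tangent_aux_s17 α (s' j) (s j * r b) h1 h2 (hs' j) (mul_pos hsj (hr b))
      refine (mul_le_mul_of_nonneg_left t
        (div_pos (mul_pos (hw b) (hH b j)) hsj).le).trans (le_of_eq ?_)
      rw [Real.mul_rpow hsj.le (hr b).le, es j]
      field_simp
    refine le_trans (le_of_eq ?_) key
    have e1 : ∀ b, w b * H b j / s j * (s' j ^ (2 - α) / ((1 - α) * (2 - α))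
        + s' j ^ (1 - α) / (1 - α) * (s j * r b - s' j)) =
        (w b * H b j) * ((s' j ^ (2 - α) / ((1 - α) * (2 - α))
          - s' j ^ (1 - α) / (1 - α) * s' j) / s j)
        + (w b * r b * H b j) * (s' j ^ (1 - α) / (1 - α)) := by
      intro b
      field_simp
      ring
    rw [Finset.sum_congr rfl (fun b _ => e1 b), Finset.sum_add_distrib, ← Finset.sum_mul,
      ← Finset.sum_mul]
    change _ = s j * _ + s' j * _
    field_simp
    ring
  have K : ∀ b, w b * (∑ j, s j ^ (1 - α) * H b j) * (r b ^ (2 - α) / ((1 - α) * (2 - α))) ≤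
      w b * (∑ j, s j ^ (1 - α) * H b j) / ((1 - α) * (2 - α))
        - w b * (∑ j, H b j * v j) * (1 - r b) / (1 - α) := by
    intro b
    have t := tangent_aux_s17 α (r b) 1 h1 h2 (hr b) one_pos
    rw [Real.one_rpow] at t
    have hA : 0 ≤ w b * ∑ j, s j ^ (1 - α) * H b j :=
      mul_nonneg (hw b).le (Finset.sum_nonneg fun j _ =>
        mul_nonneg (Real.rpow_pos_of_pos (hs j) _).le (hH b j).le)
    have t2 := mul_le_mul_of_nonneg_left t hA
    rw [← hrA b]
    generalize (∑ j, s j ^ (1 - α) * H b j) = A at *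
    have e1 : w b * A / ((1 - α) * (2 - α)) = w b * A * (1 / ((1 - α) * (2 - α))) := by ring
    have e2 : w b * (r b ^ (1 - α) * A) * (1 - r b) / (1 - α) =
      w b * A * (r b ^ (1 - α) / (1 - α) * (1 - r b)) := by ring
    rw [e1, e2]
    linarith
  have L := Finset.sum_le_sum (s := Finset.univ) fun j _ => J j
  have M := Finset.sum_le_sum (s := Finset.univ) fun b _ => K b
  rw [Finset.sum_comm] at L
  have e3 : ∀ b, ∑ j, w b * (s j ^ (1 - α) * H b j) * (r b ^ (2 - α) / ((1 - α) * (2 - α))) =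
      w b * (∑ j, s j ^ (1 - α) * H b j) * (r b ^ (2 - α) / ((1 - α) * (2 - α))) := by
    intro b
    rw [Finset.mul_sum, Finset.sum_mul]
  rw [Finset.sum_congr rfl (fun b _ => e3 b)] at L
  have e4 : ∑ b, w b * (∑ j, s j ^ (1 - α) * H b j) / ((1 - α) * (2 - α)) =
      ∑ j, s j ^ (2 - α) / ((1 - α) * (2 - α)) := by
    simp_rw [es, Finset.mul_sum, Finset.sum_div]
    rw [Finset.sum_comm]
    refine Finset.sum_congr rfl fun j _ => ?_
    rw [← Finset.sum_div]
    congr 1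
    change _ = (∑ b, w b * H b j) * _
    rw [Finset.sum_mul]
    exact Finset.sum_congr rfl fun b _ => by ring
  have e5 : ∑ b, w b * (∑ j, H b j * v j) * (1 - r b) / (1 - α) =
      ∑ j, s j * v j / (1 - α) - ∑ j, s' j * v j / (1 - α) := by
    simp_rw [Finset.mul_sum, Finset.sum_mul, Finset.sum_div]
    rw [Finset.sum_comm, ← Finset.sum_sub_distrib]
    refine Finset.sum_congr rfl fun j _ => ?_
    change _ = (∑ b, w b * H b j) * _ / _ - (∑ b, w b * r b * H b j) * _ / _
    rw [Finset.sum_mul, Finset.sum_mul, Finset.sum_div, Finset.sum_div, ← Finset.sum_sub_distrib]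
    exact Finset.sum_congr rfl fun b _ => by ring
  rw [Finset.sum_sub_distrib, e4, e5] at M
  linarith

/-- Theorem 1, W-update: the generalized dual KL divergence is non-increasing under the
multiplicative update rule for `W`. -/
theorem dualDivNMF_nonincreasing_W_update (α : ℝ) (hα1 : α ≠ 1) (hα2 : α ≠ 2)
    (p n k : ℕ) (hp : 1 ≤ p) (hn : 1 ≤ n) (hk : 1 ≤ k)
    (V : Fin p → Fin n → ℝ) (Wt : Fin p → Fin k → ℝ) (H : Fin k → Fin n → ℝ)
    (hV : ∀ i j, 0 < V i j) (hWt : ∀ i a, 0 < Wt i a) (hH : ∀ a j, 0 < H a j) :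
    let Wnext : Fin p → Fin k → ℝ := fun i a => Wt i a *
      ((∑ j, (1 / ∑ b, Wt i b * H b j) ^ (α - 1) * H a j) /
        (∑ j, H a j * V i j ^ (1 - α))) ^ (1 / (α - 1))
    dualDivNMF α V Wnext H ≤ dualDivNMF α V Wt H := by
  intro Wnext
  have a1 : 1 - α ≠ 0 := sub_ne_zero.mpr hα1.symm
  have a1' : α - 1 ≠ 0 := sub_ne_zero.mpr hα1
  have a2 : 2 - α ≠ 0 := sub_ne_zero.mpr hα2.symm
  have hnk : (Finset.univ : Finset (Fin k)).Nonempty := ⟨⟨0, hk⟩, Finset.mem_univ _⟩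
  have hnn : (Finset.univ : Finset (Fin n)).Nonempty := ⟨⟨0, hn⟩, Finset.mem_univ _⟩
  unfold dualDivNMF
  apply Finset.sum_le_sum
  intro i _
  have hs : ∀ j, 0 < ∑ b, Wt i b * H b j := fun j =>
    Finset.sum_pos (fun b _ => mul_pos (hWt i b) (hH b j)) hnk
  have hA : ∀ a, 0 < ∑ j, (1 / ∑ b, Wt i b * H b j) ^ (α - 1) * H a j := fun a =>
    Finset.sum_pos (fun j _ => mul_pos (Real.rpow_pos_of_pos (one_div_pos.mpr (hs j)) _)
      (hH a j)) hnn
  have hB : ∀ a, 0 < ∑ j, H a j * V i j ^ (1 - α) := fun a =>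
    Finset.sum_pos (fun j _ => mul_pos (hH a j) (Real.rpow_pos_of_pos (hV i j) _)) hnn
  have R := row_aux α hα1 hα2 n k hk (fun j => V i j ^ (1 - α)) (Wt i)
    (fun a => ((∑ j, (1 / ∑ b, Wt i b * H b j) ^ (α - 1) * H a j) /
        (∑ j, H a j * V i j ^ (1 - α))) ^ (1 / (α - 1))) H (hWt i)
    (fun a => Real.rpow_pos_of_pos (div_pos (hA a) (hB a)) _) hH (by
      intro a
      have e : ∀ j, (∑ b, Wt i b * H b j) ^ (1 - α) = (1 / ∑ b, Wt i b * H b j) ^ (α - 1) := by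
        intro j
        rw [one_div, Real.inv_rpow (hs j).le, ← Real.rpow_neg (hs j).le, neg_sub]
      simp_rw [e]
      rw [← Real.rpow_mul (div_pos (hA a) (hB a)).le,
        show 1 / (α - 1) * (1 - α) = -1 by field_simp; ring, Real.rpow_neg_one, inv_div]
      exact div_mul_cancel₀ _ (hA a).ne')
  have split : ∀ W : Fin p → Fin k → ℝ, ∑ j,
      ((∑ b, W i b * H b j) ^ (2 - α) - (2 - α) * (∑ b, W i b * H b j) * V i j ^ (1 - α)
      + (1 - α) * V i j ^ (2 - α)) / ((1 - α) * (2 - α)) =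
      (∑ j, (∑ b, W i b * H b j) ^ (2 - α) / ((1 - α) * (2 - α))
      - ∑ j, (∑ b, W i b * H b j) * V i j ^ (1 - α) / (1 - α))
      + ∑ j, V i j ^ (2 - α) / (2 - α) := by
    intro W
    rw [← Finset.sum_sub_distrib, ← Finset.sum_add_distrib]
    refine Finset.sum_congr rfl fun j _ => ?_
    field_simp
  rw [split, split]
  exact add_le_add_left R _
end

section
/- Let p ≥ 1, fix indices a and j, and let w₁,…,w_p > 0, v₁,…,v_p > 0 and c₁,…,c_p > 0 be real numbers (where c_i = Σ_b W_{ib} H^t_{bj} plays the role of the current reconstruction). Then the limit as α → 1 (over α ≠ 1) of ( Σ_i w_i c_i^{1−α} / Σ_i w_i v_i^{1−α} )^{1/(α−1)} exists and equals exp( Σ_i w_i log(v_i / c_i) / Σ_i w_i ). Consequently, as α → 1 the generalized multiplicative update H^{t+1}_{aj} = H^t_{aj} ( Σ_i (1/c_i)^{α−1} w_i / Σ_i w_i v_i^{1−α} )^{1/(α−1)} converges to the exponential update H^{t+1}_{aj} = H^t_{aj} exp( Σ_i w_i log(v_i/c_i) / Σ_i w_i ). -/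
theorem aux_hasDerivAt (p : ℕ) (w x : Fin p → ℝ) (hx : ∀ i, 0 < x i) :
    HasDerivAt (fun α : ℝ => ∑ i, w i * x i ^ (1 - α)) (∑ i, w i * (-Real.log (x i))) 1 := by
  apply HasDerivAt.fun_sum
  intro i _
  apply HasDerivAt.const_mul
  have h := ((hasDerivAt_id (1 : ℝ)).const_sub 1).const_rpow (hx i)
  simpa using h

/-- The l'Hospital-rule limit in Theorem 2: as `α → 1`, the generalized multiplicative
update factor converges to the exponential factor of the Poisson-model update, and
consequently the updated entry `H^{t+1}_{aj}` converges to the exponential update. -/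
theorem update_factor_tendsto_one (p : ℕ) (hp : 1 ≤ p) (w v c : Fin p → ℝ)
    (hw : ∀ i, 0 < w i) (hv : ∀ i, 0 < v i) (hc : ∀ i, 0 < c i) (Htaj : ℝ) :
    Filter.Tendsto
      (fun α : ℝ =>
        ((∑ i, w i * c i ^ (1 - α)) / (∑ i, w i * v i ^ (1 - α))) ^ (1 / (α - 1)))
      (nhdsWithin 1 {(1 : ℝ)}ᶜ)
      (nhds (Real.exp ((∑ i, w i * Real.log (v i / c i)) / (∑ i, w i)))) ∧
    Filter.Tendsto
      (fun α : ℝ => Htaj *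
        ((∑ i, (1 / c i) ^ (α - 1) * w i) / (∑ i, w i * v i ^ (1 - α))) ^ (1 / (α - 1)))
      (nhdsWithin 1 {(1 : ℝ)}ᶜ)
      (nhds (Htaj * Real.exp ((∑ i, w i * Real.log (v i / c i)) / (∑ i, w i)))) := by
  have first : Filter.Tendsto
      (fun α : ℝ =>
        ((∑ i, w i * c i ^ (1 - α)) / (∑ i, w i * v i ^ (1 - α))) ^ (1 / (α - 1)))
      (nhdsWithin 1 {(1 : ℝ)}ᶜ)
      (nhds (Real.exp ((∑ i, w i * Real.log (v i / c i)) / (∑ i, w i)))) := by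
    have hne : (Finset.univ : Finset (Fin p)).Nonempty := ⟨⟨0, hp⟩, Finset.mem_univ _⟩
    have pos : ∀ (x : Fin p → ℝ), (∀ i, 0 < x i) → ∀ α : ℝ, 0 < ∑ i, w i * x i ^ (1 - α) :=
      fun x hx α => Finset.sum_pos
        (fun i _ => mul_pos (hw i) (Real.rpow_pos_of_pos (hx i) _)) hne
    have hA := (aux_hasDerivAt p w c hc).log (pos c hc 1).ne'
    have hB := (aux_hasDerivAt p w v hv).log (pos v hv 1).ne'
    have h := (hasDerivAt_iff_tendsto_slope.mp (hA.sub hB))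
    have hlim : (∑ i, w i * (-Real.log (c i))) / (∑ i, w i * c i ^ (1 - (1 : ℝ)))
        - (∑ i, w i * (-Real.log (v i))) / (∑ i, w i * v i ^ (1 - (1 : ℝ)))
        = (∑ i, w i * Real.log (v i / c i)) / (∑ i, w i) := by
      simp only [sub_self, Real.rpow_zero, mul_one]
      rw [← sub_div, ← Finset.sum_sub_distrib]
      congr 1
      refine Finset.sum_congr rfl fun i _ => ?_
      rw [Real.log_div (hv i).ne' (hc i).ne']
      ring
    rw [hlim] at h
    refine ((Real.continuous_exp.tendsto _).comp h).congr fun α => ?_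
    rw [Real.rpow_def_of_pos (div_pos (pos c hc α) (pos v hv α)),
      Real.log_div (pos c hc α).ne' (pos v hv α).ne']
    simp [slope_def_field, div_eq_mul_inv]
  refine ⟨first, ?_⟩
  refine (first.const_mul Htaj).congr fun α => ?_
  have e : ∀ i, (1 / c i) ^ (α - 1) * w i = w i * c i ^ (1 - α) := fun i => by
    rw [one_div, Real.inv_rpow (hc i).le, ← Real.rpow_neg (hc i).le, neg_sub, mul_comm]
  simp only [e]
end

section
/- (Theorem 2, monotonicity) Let p, n, k ≥ 1 and let V ∈ ℝ^{p×n}, W ∈ ℝ^{p×k}, H^t ∈ ℝ^{k×n} have strictly positive entries. Define H^{t+1}_{aj} = H^t_{aj} · exp( Σ_i W_{ia} log( V_{ij} / Σ_b W_{ib} H^t_{bj} ) / Σ_i W_{ia} ). Then D^d(W H^{t+1} ‖ V) ≤ D^d(W H^t ‖ V), where D^d(WH‖V) = Σ_{i,j} [ (WH)_{ij} log( (WH)_{ij} / V_{ij} ) − (WH)_{ij} + V_{ij} ]; i.e., the dual Kullback–Leibler divergence of the Poisson model is non-increasing under this multiplicative update rule for H. -/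
/-- Dual Kullback–Leibler divergence of the Poisson model `D^d(WH‖V)` between the
reconstruction `WH` and the positive matrix `V`. -/
noncomputable def dualKLPoisson {p n k : ℕ} (V : Fin p → Fin n → ℝ)
    (W : Fin p → Fin k → ℝ) (H : Fin k → Fin n → ℝ) : ℝ :=
  ∑ i, ∑ j,
    ((∑ b, W i b * H b j) * Real.log ((∑ b, W i b * H b j) / V i j)
      - (∑ b, W i b * H b j) + V i j)

theorem aux_logsum {k : ℕ} (hk : 1 ≤ k) (w s : Fin k → ℝ) (hw : ∀ b, 0 < w b) :
    (∑ b, w b * Real.exp (s b)) * Real.log ((∑ b, w b * Real.exp (s b)) / ∑ b, w b)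
      ≤ ∑ b, w b * Real.exp (s b) * s b := by
  have : Nonempty (Fin k) := ⟨⟨0, hk⟩⟩
  have hq : 0 < ∑ b, w b := Finset.sum_pos (fun b _ => hw b) Finset.univ_nonempty
  have hr : 0 < ∑ b, w b * Real.exp (s b) :=
    Finset.sum_pos (fun b _ => mul_pos (hw b) (Real.exp_pos _)) Finset.univ_nonempty
  set r := ∑ b, w b * Real.exp (s b) with hrdef
  set q := ∑ b, w b with hqdef
  set c := Real.log (r / q) with hc
  have hec : Real.exp c = r / q := Real.exp_log (div_pos hr hq)
  have h1 : ∑ b, w b * Real.exp (s b) * (c - s b)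
      ≤ ∑ b, (w b * Real.exp c - w b * Real.exp (s b)) := by
    apply Finset.sum_le_sum
    intro b _
    have h2 := Real.add_one_le_exp (c - s b)
    have h3 : Real.exp (s b) * Real.exp (c - s b) = Real.exp c := by
      rw [← Real.exp_add]; congr 1; ring
    have h4 := mul_le_mul_of_nonneg_left h2 (mul_pos (hw b) (Real.exp_pos (s b))).le
    rw [mul_assoc (w b) _ (Real.exp (c - s b)), h3] at h4
    linarith
  have h5 : ∑ b, (w b * Real.exp c - w b * Real.exp (s b)) = 0 := by
    rw [Finset.sum_sub_distrib, ← Finset.sum_mul, hec, ← hrdef, ← hqdef]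
    field_simp
    ring
  have h6 : ∑ b, w b * Real.exp (s b) * (c - s b)
      = r * c - ∑ b, w b * Real.exp (s b) * s b := by
    simp only [mul_sub, Finset.sum_sub_distrib]
    rw [← Finset.sum_mul]
  linarith

theorem aux_col_s19 {p k : ℕ} (hp : 1 ≤ p) (hk : 1 ≤ k) (V : Fin p → ℝ)
    (W : Fin p → Fin k → ℝ) (H : Fin k → ℝ) (s : Fin k → ℝ)
    (hV : ∀ i, 0 < V i) (hW : ∀ i a, 0 < W i a) (hH : ∀ a, 0 < H a)
    (hs : ∀ a, s a = (∑ i, W i a * Real.log (V i / ∑ b, W i b * H b)) / (∑ i, W i a)) :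
    ∑ i, ((∑ b, W i b * (H b * Real.exp (s b))) *
        Real.log ((∑ b, W i b * (H b * Real.exp (s b))) / V i)
        - (∑ b, W i b * (H b * Real.exp (s b))) + V i)
      ≤ ∑ i, ((∑ b, W i b * H b) * Real.log ((∑ b, W i b * H b) / V i)
        - (∑ b, W i b * H b) + V i) := by
  have : Nonempty (Fin k) := ⟨⟨0, hk⟩⟩
  have : Nonempty (Fin p) := ⟨⟨0, hp⟩⟩
  have hq : ∀ i, 0 < ∑ b, W i b * H b := fun i =>
    Finset.sum_pos (fun b _ => mul_pos (hW i b) (hH b)) Finset.univ_nonempty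
  have hr : ∀ i, 0 < ∑ b, W i b * (H b * Real.exp (s b)) := fun i =>
    Finset.sum_pos (fun b _ => mul_pos (hW i b) (mul_pos (hH b) (Real.exp_pos _)))
      Finset.univ_nonempty
  have hS : ∀ a, 0 < ∑ i, W i a := fun a =>
    Finset.sum_pos (fun i _ => hW i a) Finset.univ_nonempty
  obtain ⟨L, hL⟩ : ∃ L : Fin p → ℝ, ∀ i, L i = Real.log (V i / ∑ b, W i b * H b) :=
    ⟨_, fun _ => rfl⟩
  have hsS : ∀ a, ∑ i, W i a * L i = (∑ i, W i a) * s a := by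
    intro a
    rw [hs a, mul_div_cancel₀ _ (hS a).ne']
    simp only [hL]
  rw [← sub_nonneg, ← Finset.sum_sub_distrib]
  have key : ∀ i, ∑ b, H b * (W i b * (-L i - 1) - W i b * Real.exp (s b) * (s b - L i - 1))
      ≤ ((∑ b, W i b * H b) * Real.log ((∑ b, W i b * H b) / V i)
        - (∑ b, W i b * H b) + V i) - ((∑ b, W i b * (H b * Real.exp (s b))) *
        Real.log ((∑ b, W i b * (H b * Real.exp (s b))) / V i)
        - (∑ b, W i b * (H b * Real.exp (s b))) + V i) := by
    intro i
    have h1 := aux_logsum hk (fun b => W i b * H b) s (fun b => mul_pos (hW i b) (hH b))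
    simp only [mul_assoc] at h1
    have e1 : ∑ b, H b * (W i b * (-L i - 1) - W i b * Real.exp (s b) * (s b - L i - 1))
        = (∑ b, W i b * H b) * (-L i - 1) - ∑ b, W i b * (H b * (Real.exp (s b) * s b))
          + (∑ b, W i b * (H b * Real.exp (s b))) * (L i + 1) := by
      rw [Finset.sum_mul, Finset.sum_mul, ← Finset.sum_sub_distrib, ← Finset.sum_add_distrib]
      exact Finset.sum_congr rfl fun b _ => by ring
    rw [e1]
    have h2 := hL i
    rw [Real.log_div (hV i).ne' (hq i).ne'] at h2
    rw [Real.log_div (hr i).ne' (hq i).ne'] at h1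
    rw [Real.log_div (hr i).ne' (hV i).ne', Real.log_div (hq i).ne' (hV i).ne', h2]
    linarith
  refine le_trans ?_ (Finset.sum_le_sum fun i _ => key i)
  rw [Finset.sum_comm]
  refine Finset.sum_nonneg fun b _ => ?_
  rw [← Finset.mul_sum]
  refine mul_nonneg (hH b).le ?_
  have e2 : ∑ i, (W i b * (-L i - 1) - W i b * Real.exp (s b) * (s b - L i - 1))
      = (∑ i, W i b * L i) * (Real.exp (s b) - 1)
        + (∑ i, W i b) * (-1 - Real.exp (s b) * (s b - 1)) := by
    rw [Finset.sum_mul, Finset.sum_mul, ← Finset.sum_add_distrib]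
    exact Finset.sum_congr rfl fun i _ => by ring
  rw [e2, hsS b]
  have h3 := mul_nonneg (hS b).le (sub_nonneg.2 (Real.add_one_le_exp (s b)))
  linarith

/-- Theorem 2, monotonicity: the dual KL divergence of the Poisson model is
non-increasing under the exponential multiplicative update rule for `H`. -/
theorem dualKLPoisson_nonincreasing_H_update (p n k : ℕ) (hp : 1 ≤ p) (hn : 1 ≤ n)
    (hk : 1 ≤ k)
    (V : Fin p → Fin n → ℝ) (W : Fin p → Fin k → ℝ) (Ht : Fin k → Fin n → ℝ)
    (hV : ∀ i j, 0 < V i j) (hW : ∀ i a, 0 < W i a) (hHt : ∀ a j, 0 < Ht a j) :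
    let Hnext : Fin k → Fin n → ℝ := fun a j => Ht a j *
      Real.exp ((∑ i, W i a * Real.log (V i j / ∑ b, W i b * Ht b j)) / (∑ i, W i a))
    dualKLPoisson V W Hnext ≤ dualKLPoisson V W Ht := by
  intro Hnext
  unfold dualKLPoisson
  rw [Finset.sum_comm]
  refine le_of_le_of_eq ?_ Finset.sum_comm
  refine Finset.sum_le_sum fun j _ => ?_
  exact aux_col_s19 hp hk (fun i => V i j) W (fun a => Ht a j) _ (fun i => hV i j) hW
    (fun a => hHt a j) (fun a => rfl)
end
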